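/- Let r ∈ (1,∞) and r̂ := min(r,2). Let ς : [0,∞) → ℝ be continuous, suppose α ↦ α·ς(α) is differentiable on (0,∞), and suppose there exist ς_de ≥ 0 and ς_sm > 0 such that d/dα(α·ς(α)) ≥ ς_sm·(ς_de^r + α^r)^((r−2)/r) for all α > 0. Then there exists a constant c > 0 depending only on r such that for all α, β > 0: ς(α) + ς(β) ≥ c·ς_sm·(ς_de^r + α^r + β^r)^((r−2)/r). -/

import Mathlib

open Real

/-! Write `m α = (ς_de ^ r + α ^ r) ^ ((r - 2) / r)`. By scaling,
`m t ≥ (t / α) ^ max (r - 2) 0 * m α` for `0 < t ≤ α`. Integrating `(t * ς t)' ≥ ς_sm * m t` over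
`(0, α)` and dividing by `α` therefore gives `ς α ≥ ς_sm * m α / (max (r - 2) 0 + 1)`. Since the
exponent `(r - 2) / r` is at most `1`, the sum `m α + m β` dominates the joint weight
`(ς_de ^ r + α ^ r + β ^ r) ^ ((r - 2) / r)`. -/

lemma intervalIntegrable_div_rpow {q b : ℝ} (hq : -1 < q) (hb : b ≠ 0) :
    IntervalIntegrable (fun t : ℝ => (t / b) ^ q) MeasureTheory.volume 0 b := by
  have h : IntervalIntegrable (fun t : ℝ => t ^ q) MeasureTheory.volume 0 1 :=
    intervalIntegral.intervalIntegrable_rpow' hq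
  simpa [div_eq_mul_inv, hb] using h.comp_mul_right (c := b⁻¹)

lemma integral_div_rpow {q b : ℝ} (hq : -1 < q) (hb : b ≠ 0) :
    ∫ t in (0 : ℝ)..b, (t / b) ^ q = b / (q + 1) := by
  have hq' : q + 1 ≠ 0 := by linarith
  rw [intervalIntegral.integral_comp_div (fun u : ℝ => u ^ q) hb, zero_div, div_self hb,
    integral_rpow (Or.inl hq), one_rpow, zero_rpow hq', sub_zero, smul_eq_mul, mul_one_div]

lemma mul_div_add_one_le_sub_of_mul_div_rpow_le_deriv {f : ℝ → ℝ} {b C q : ℝ} (hb : 0 < b)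
    (hq : -1 < q) (hfc : ContinuousOn f (Set.Icc 0 b)) (hfd : DifferentiableOn ℝ f (Set.Ioo 0 b))
    (hf : ∀ t ∈ Set.Ioo 0 b, C * (t / b) ^ q ≤ deriv f t) :
    C * (b / (q + 1)) ≤ f b - f 0 := by
  rw [← integral_div_rpow hq hb.ne', ← intervalIntegral.integral_const_mul]
  refine intervalIntegral.integral_le_sub_of_hasDeriv_right_of_le hb.le hfc (fun t ht => ?_) ?_ hf
  · exact (hfd.differentiableAt (isOpen_Ioo.mem_nhds ht)).hasDerivAt.hasDerivWithinAt
  · exact (intervalIntegrable_iff_integrableOn_Icc_of_le hb.le).mp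
      ((intervalIntegrable_div_rpow hq hb.ne').const_mul C)

lemma div_rpow_mul_add_rpow_le {r D t α : ℝ} (hr : 0 < r) (hD : 0 ≤ D) (ht : 0 < t)
    (htα : t ≤ α) :
    (t / α) ^ max (r - 2) 0 * (D + α ^ r) ^ ((r - 2) / r) ≤ (D + t ^ r) ^ ((r - 2) / r) := by
  have hα : 0 < α := ht.trans_le htα
  rcases le_total r 2 with hr2 | hr2
  · rw [max_eq_right (by linarith), rpow_zero, one_mul]
    exact rpow_le_rpow_of_nonpos (by positivity) (by gcongr)
      (div_nonpos_of_nonpos_of_nonneg (by linarith) hr.le)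
  · have hscale : (t / α) ^ r * (D + α ^ r) ≤ D + t ^ r := by
      have hle : (t / α) ^ r ≤ 1 :=
        rpow_le_one (by positivity) ((div_le_one hα).mpr htα) hr.le
      calc (t / α) ^ r * (D + α ^ r) = (t / α) ^ r * D + t ^ r := by
            rw [mul_add, ← mul_rpow (by positivity) hα.le, div_mul_cancel₀ t hα.ne']
        _ ≤ D + t ^ r := by gcongr; exact mul_le_of_le_one_left hD hle
    calc (t / α) ^ max (r - 2) 0 * (D + α ^ r) ^ ((r - 2) / r)
        = ((t / α) ^ r * (D + α ^ r)) ^ ((r - 2) / r) := by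
          rw [max_eq_left (by linarith), mul_rpow (by positivity) (by positivity),
            ← rpow_mul (by positivity), mul_div_cancel₀ _ hr.ne']
      _ ≤ (D + t ^ r) ^ ((r - 2) / r) :=
          rpow_le_rpow (by positivity) hscale (div_nonneg (by linarith) hr.le)

lemma add_add_rpow_le_add {p a b c : ℝ} (hp : p ≤ 1) (ha : 0 ≤ a) (hb : 0 < b) (hc : 0 ≤ c) :
    (a + b + c) ^ p ≤ (a + b) ^ p + (a + c) ^ p := by
  rcases le_total 0 p with hp0 | hp0
  · calc (a + b + c) ^ p ≤ ((a + b) + (a + c)) ^ p :=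
          rpow_le_rpow (by positivity) (by linarith) hp0
      _ ≤ (a + b) ^ p + (a + c) ^ p := rpow_add_le_add_rpow (by positivity) (by positivity) hp0 hp
  · calc (a + b + c) ^ p ≤ (a + b) ^ p :=
          rpow_le_rpow_of_nonpos (by positivity) (by linarith) hp0
      _ ≤ (a + b) ^ p + (a + c) ^ p := le_add_of_nonneg_right (by positivity)

lemma mul_add_rpow_le_of_le_deriv_mul {r D s α : ℝ} {ς : ℝ → ℝ} (hr : 0 < r) (hD : 0 ≤ D)
    (hs : 0 ≤ s) (hα : 0 < α) (hcont : ContinuousOn (fun t => t * ς t) (Set.Icc 0 α))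
    (hdiff : DifferentiableOn ℝ (fun t => t * ς t) (Set.Ioo 0 α))
    (hderiv : ∀ t ∈ Set.Ioo 0 α,
      s * (D + t ^ r) ^ ((r - 2) / r) ≤ deriv (fun t => t * ς t) t) :
    (max (r - 2) 0 + 1)⁻¹ * s * (D + α ^ r) ^ ((r - 2) / r) ≤ ς α := by
  have hint : s * (D + α ^ r) ^ ((r - 2) / r) * (α / (max (r - 2) 0 + 1))
      ≤ α * ς α - 0 * ς 0 := by
    refine mul_div_add_one_le_sub_of_mul_div_rpow_le_deriv hα
      (neg_one_lt_zero.trans_le (le_max_right _ _)) hcont hdiff fun t ht => ?_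
    calc s * (D + α ^ r) ^ ((r - 2) / r) * (t / α) ^ max (r - 2) 0
        = s * ((t / α) ^ max (r - 2) 0 * (D + α ^ r) ^ ((r - 2) / r)) := by ring
      _ ≤ s * (D + t ^ r) ^ ((r - 2) / r) :=
          mul_le_mul_of_nonneg_left (div_rpow_mul_add_rpow_le hr hD ht.1 ht.2.le) hs
      _ ≤ deriv (fun t => t * ς t) t := hderiv t ht
  refine le_of_mul_le_mul_left ?_ hα
  calc α * ((max (r - 2) 0 + 1)⁻¹ * s * (D + α ^ r) ^ ((r - 2) / r))
      = s * (D + α ^ r) ^ ((r - 2) / r) * (α / (max (r - 2) 0 + 1)) := by ring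
    _ ≤ α * ς α := by simpa only [zero_mul, sub_zero] using hint

theorem stmt4_general {r ς_de ς_sm : ℝ} {ς : ℝ → ℝ} (hr : 0 < r)
    (hcont : ContinuousOn (fun t => t * ς t) (Set.Ici 0))
    (hdiff : ∀ α, 0 < α → DifferentiableAt ℝ (fun t => t * ς t) α)
    (hde : 0 ≤ ς_de) (hsm : 0 ≤ ς_sm)
    (hderiv : ∀ α, 0 < α →
      ς_sm * (ς_de ^ r + α ^ r) ^ ((r - 2) / r) ≤ deriv (fun t => t * ς t) α)
    {α β : ℝ} (hα : 0 < α) (hβ : 0 < β) :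
    (max (r - 2) 0 + 1)⁻¹ * ς_sm * (ς_de ^ r + α ^ r + β ^ r) ^ ((r - 2) / r) ≤ ς α + ς β := by
  have hprofile : ∀ γ, 0 < γ →
      (max (r - 2) 0 + 1)⁻¹ * ς_sm * (ς_de ^ r + γ ^ r) ^ ((r - 2) / r) ≤ ς γ := fun γ hγ =>
    mul_add_rpow_le_of_le_deriv_mul hr (by positivity) hsm hγ (hcont.mono Set.Icc_subset_Ici_self)
      (fun t ht => (hdiff t ht.1).differentiableWithinAt) (fun t ht => hderiv t ht.1)
  have hexp : (r - 2) / r ≤ 1 := (div_le_one hr).mpr (by linarith)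
  calc (max (r - 2) 0 + 1)⁻¹ * ς_sm * (ς_de ^ r + α ^ r + β ^ r) ^ ((r - 2) / r)
      ≤ (max (r - 2) 0 + 1)⁻¹ * ς_sm *
          ((ς_de ^ r + α ^ r) ^ ((r - 2) / r) + (ς_de ^ r + β ^ r) ^ ((r - 2) / r)) := by
        gcongr
        exact add_add_rpow_le_add hexp (by positivity) (by positivity) (by positivity)
    _ ≤ ς α + ς β := by
        rw [mul_add]
        exact add_le_add (hprofile α hα) (hprofile β hβ)

/-- Lower bound (A.5) on the sum of radial profile values: if `α ↦ α ς(α)` has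
derivative bounded below by `ς_sm (ς_de^r + α^r)^((r-2)/r)` on `(0,∞)`, then for
all `α, β > 0` one has `ς(α) + ς(β) ≥ c ς_sm (ς_de^r + α^r + β^r)^((r-2)/r)`,
with `c` depending only on `r`. -/
theorem stmt4 (r : ℝ) (hr : 1 < r) :
    ∃ c : ℝ, 0 < c ∧
      ∀ (ς : ℝ → ℝ) (ς_de ς_sm : ℝ),
        ContinuousOn ς (Set.Ici 0) →
        (∀ α : ℝ, 0 < α → DifferentiableAt ℝ (fun t : ℝ => t * ς t) α) →
        0 ≤ ς_de → 0 < ς_sm →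
        (∀ α : ℝ, 0 < α →
          ς_sm * (ς_de ^ r + α ^ r) ^ ((r - 2) / r) ≤ deriv (fun t : ℝ => t * ς t) α) →
        ∀ α β : ℝ, 0 < α → 0 < β →
          c * ς_sm * (ς_de ^ r + α ^ r + β ^ r) ^ ((r - 2) / r) ≤ ς α + ς β := by
  refine ⟨(max (r - 2) 0 + 1)⁻¹, by positivity, ?_⟩
  intro ς ς_de ς_sm hcont hdiff hde hsm hderiv α β
  exact stmt4_general (one_pos.trans hr) (continuousOn_id.mul hcont) hdiff hde hsm.le hderiv
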